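/- arXiv:1408.5214 — 5 statements merged into one kernel-verified Lean document; each statement's English description precedes it below -/
import Mathlib

section
/- Let f : ℝⁿ → ℝ (ℝⁿ with the standard Euclidean inner product) be a convex function. Let x, y ∈ ℝⁿ, let p be a minimizer over ℝⁿ of z ↦ f(z) + ½‖z − x‖₂², and let q be a minimizer over ℝⁿ of z ↦ f(z) + ½‖z − y‖₂². Then the proximal operator is firmly nonexpansive: ‖p − q‖₂² ≤ ⟨x − y, p − q⟩. -/
/-!
Minimality of `p` says that `x - p` is a subgradient of `f` at `p`: comparing the objective at `p`
with its value on the segment from `p` towards `z`, and using convexity of `f` there, the first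
order term as the point tends to `p` gives `f p + ⟪x - p, z - p⟫ ≤ f z`
(`prox_subgradient_inequality`). Firm nonexpansiveness is then monotonicity of the
subdifferential: the inequality for `p` tested at `q` and the one for `q` tested at `p` add up to
`⟪(x - p) - (y - q), p - q⟫ ≥ 0`.
-/

noncomputable section

open scoped RealInnerProductSpace

/-- If `f` is convex and `p` minimizes `z ↦ f z + ½‖z - x‖²`, then `x - p` is a subgradient of `f`
at `p`. -/
theorem prox_subgradient_inequality {E : Type*} [NormedAddCommGroup E] [InnerProductSpace ℝ E]
    {f : E → ℝ} (hf : ConvexOn ℝ Set.univ f) {x p : E}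
    (hp : ∀ z : E, f p + (1 / 2) * ‖p - x‖ ^ 2 ≤ f z + (1 / 2) * ‖z - x‖ ^ 2) (z : E) :
    f p + ⟪x - p, z - p⟫ ≤ f z := by
  have key : ∀ t : ℝ, 0 < t → t ≤ 1 →
      0 ≤ (f z - f p - ⟪x - p, z - p⟫) + t / 2 * ‖z - p‖ ^ 2 := by
    intro t ht ht1
    have h1 := hp ((1 - t) • p + t • z)
    have h2 := hf.2 (Set.mem_univ p) (Set.mem_univ z) (sub_nonneg.2 ht1) ht.le
      (sub_add_cancel 1 t)
    have h3 : (1 - t) • p + t • z - x = t • (z - p) - (x - p) := by module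
    rw [h3, norm_sub_sq_real (t • (z - p)), norm_smul, real_inner_smul_left,
      real_inner_comm (x - p), norm_sub_rev x p, mul_pow, Real.norm_eq_abs, sq_abs] at h1
    simp only [smul_eq_mul] at h2
    refine nonneg_of_mul_nonneg_right (a := t) ?_ ht
    linarith
  by_contra! h
  set c := f z - f p - ⟪x - p, z - p⟫ with hc
  have hc0 : c < 0 := by linarith
  have hD : 0 ≤ ‖z - p‖ ^ 2 := by positivity
  have hpos : 0 < ‖z - p‖ ^ 2 - c := by linarith
  -- This step length keeps the second order term `t / 2 * ‖z - p‖ ^ 2` below `-c / 2`.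
  have h1 := key (-c / (‖z - p‖ ^ 2 - c)) (div_pos (by linarith) hpos)
    ((div_le_one hpos).2 (by linarith))
  have h2 : -c / (‖z - p‖ ^ 2 - c) * ‖z - p‖ ^ 2 ≤ -c := by
    rw [div_mul_eq_mul_div, div_le_iff₀ hpos]
    nlinarith
  linarith

/-- firm nonexpansiveness of the proximal operator. -/
theorem prox_firmly_nonexpansive {n : ℕ} (f : EuclideanSpace ℝ (Fin n) → ℝ)
    (hf : ConvexOn ℝ Set.univ f)
    (x y p q : EuclideanSpace ℝ (Fin n))
    (hp : ∀ z : EuclideanSpace ℝ (Fin n),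
      f p + (1 / 2) * ‖p - x‖ ^ 2 ≤ f z + (1 / 2) * ‖z - x‖ ^ 2)
    (hq : ∀ z : EuclideanSpace ℝ (Fin n),
      f q + (1 / 2) * ‖q - y‖ ^ 2 ≤ f z + (1 / 2) * ‖z - y‖ ^ 2) :
    ‖p - q‖ ^ 2 ≤ ⟪x - y, p - q⟫ := by
  have h1 := prox_subgradient_inequality hf hp q
  have h2 := prox_subgradient_inequality hf hq p
  have h3 : ⟪x - p, q - p⟫ + ⟪y - q, p - q⟫ = ‖p - q‖ ^ 2 - ⟪x - y, p - q⟫ := by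
    rw [← neg_sub p q, inner_neg_right, ← real_inner_self_eq_norm_sq (p - q),
      neg_add_eq_sub, ← inner_sub_left, ← inner_sub_left]
    congr 1
    abel
  linarith
end
end

section
/- Let f : ℝⁿ → ℝ (ℝⁿ with the standard Euclidean inner product) be a convex function. Let x, y ∈ ℝⁿ, let p be a minimizer over ℝⁿ of z ↦ f(z) + ½‖z − x‖₂², and let q be a minimizer over ℝⁿ of z ↦ f(z) + ½‖z − y‖₂². Then the proximal operator is nonexpansive: ‖p − q‖₂ ≤ ‖x − y‖₂. -/
/-!
The minimizer `p` of `z ↦ f z + ½‖z - x‖²` is characterised by `x - p` being a subgradient of `f`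
at `p` (`add_inner_le_of_prox`). Adding the subgradient inequalities at `p` and at `q`, each tested
at the other point, cancels the values of `f` and leaves `‖p - q‖² ≤ ⟪x - y, p - q⟫` (firm
nonexpansiveness); Cauchy–Schwarz then gives the bound.
-/

noncomputable section

open scoped RealInnerProductSpace

/-- The residual `x - p` at a proximal point `p` of `x` is a subgradient of `f` at `p`. Moving from
`p` a fraction `t` of the way to `z`, convexity bounds the change of `f` linearly in `t`, while the
quadratic term contributes `t * ⟪p - x, z - p⟫` up to order `t ^ 2`. -/
theorem add_inner_le_of_prox {n : ℕ} {f : EuclideanSpace ℝ (Fin n) → ℝ}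
    (hf : ConvexOn ℝ Set.univ f) {x p : EuclideanSpace ℝ (Fin n)}
    (hp : ∀ z : EuclideanSpace ℝ (Fin n),
      f p + (1 / 2) * ‖p - x‖ ^ 2 ≤ f z + (1 / 2) * ‖z - x‖ ^ 2)
    (z : EuclideanSpace ℝ (Fin n)) :
    f p + ⟪x - p, z - p⟫ ≤ f z := by
  have key : ∀ t : ℝ, 0 < t → t ≤ 1 →
      f p + ⟪x - p, z - p⟫ ≤ f z + t * ((1 / 2) * ‖z - p‖ ^ 2) := by
    intro t ht ht1
    have hconv := hf.2 (Set.mem_univ p) (Set.mem_univ z) (sub_nonneg.2 ht1) ht.le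
      (sub_add_cancel 1 t)
    have hmin := hp ((1 - t) • p + t • z)
    have hstep : (1 - t) • p + t • z - x = t • (z - p) - (x - p) := by module
    rw [hstep, norm_sub_sq_real (t • (z - p)), norm_smul, Real.norm_of_nonneg ht.le,
      real_inner_smul_left, real_inner_comm, norm_sub_rev p x] at hmin
    simp only [smul_eq_mul] at hconv
    refine le_of_mul_le_mul_left ?_ ht
    nlinarith
  by_contra! hlt
  set c := (1 / 2) * ‖z - p‖ ^ 2
  have hc : 0 ≤ c := by positivity
  set d := f p + ⟪x - p, z - p⟫ - f z with hd
  have hd0 : 0 < d := by linarith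
  -- The step `t = d / (d + c)` lies in `(0, 1]` and satisfies `t * c < d`.
  have h := key (d / (d + c)) (by positivity) ((div_le_one (by positivity)).2 (by linarith))
  have hsmall : d / (d + c) * c < d := by
    rw [div_mul_eq_mul_div, div_lt_iff₀ (by positivity)]
    nlinarith
  linarith

/-- nonexpansiveness (Lipschitz continuity) of the proximal operator. -/
theorem prox_nonexpansive {n : ℕ} (f : EuclideanSpace ℝ (Fin n) → ℝ)
    (hf : ConvexOn ℝ Set.univ f)
    (x y p q : EuclideanSpace ℝ (Fin n))
    (hp : ∀ z : EuclideanSpace ℝ (Fin n),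
      f p + (1 / 2) * ‖p - x‖ ^ 2 ≤ f z + (1 / 2) * ‖z - x‖ ^ 2)
    (hq : ∀ z : EuclideanSpace ℝ (Fin n),
      f q + (1 / 2) * ‖q - y‖ ^ 2 ≤ f z + (1 / 2) * ‖z - y‖ ^ 2) :
    ‖p - q‖ ≤ ‖x - y‖ := by
  have h₁ := add_inner_le_of_prox hf hp q
  have h₂ := add_inner_le_of_prox hf hq p
  have hsum : ⟪x - p, q - p⟫ + ⟪y - q, p - q⟫ = ⟪p - q, p - q⟫ - ⟪x - y, p - q⟫ := by
    rw [← neg_sub p q, inner_neg_right, neg_add_eq_sub, ← inner_sub_left, ← inner_sub_left]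
    congr 1
    abel
  rw [real_inner_self_eq_norm_sq] at hsum
  have hcs := real_inner_le_norm (x - y) (p - q)
  by_contra! hlt
  have hpos : 0 < ‖p - q‖ := (norm_nonneg _).trans_lt hlt
  nlinarith
end
end

section
/- Let τ > 0 and let I ⊆ ℝ be an interval of class T₁, i.e., of one of the forms [c, ∞) with c > 0, (−∞, c] with c < 0, [c, d] with 0 < c < d, or [d, c] with d < c < 0. Then for every q ∈ ℝ, the point p = [τ·shrink(τ⁻¹q)]_I⁺ satisfies p ∈ I and τ·|p| + ½(p − q)² ≤ τ·|t| + ½(t − q)² for all t ∈ I; that is, p is the unique minimizer over I of t ↦ τ|t| + ½(t − q)². -/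
/-!
On an interval of class `T₁` all points have the same sign `s`, so there
`τ|t| + ½(t − q)²` is the quadratic `s τ t + ½(t − q)²`, whose gradient at `p` is `p − (q − sτ)`.
By strong convexity of this quadratic, `p` is its unique minimizer over `I` as soon as
`0 ≤ (t − p)(p − (q − sτ))` for all `t ∈ I`. The projection `p` of `w = τ·shrink(q/τ)` satisfies
`0 ≤ (t − p)(p − w)` (`IsProjR.variational`). If `w = q − sτ` this is the required inequality.
Otherwise `s w ≤ 0` and `s q ≤ τ` (`shrink_cases`), so `p − w` and `p − (q − sτ)` both have the
sign `s` of `p`, and the two inequalities are equivalent.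
-/

noncomputable section

/-- The shrinkage operator `shrink(s) = sign(s) * max (|s| - 1) 0`. -/
def shrink (s : ℝ) : ℝ := Real.sign s * max (|s| - 1) 0

/-- `IsProjR I w p` : `p` is the projection of `w` onto `I ⊆ ℝ`. -/
def IsProjR (I : Set ℝ) (w p : ℝ) : Prop := p ∈ I ∧ ∀ t ∈ I, |p - w| ≤ |t - w|

/-- Membership in the class `T₁` of intervals. -/
def InT1 (I : Set ℝ) : Prop :=
  (∃ c : ℝ, 0 < c ∧ I = Set.Ici c) ∨
  (∃ c : ℝ, c < 0 ∧ I = Set.Iic c) ∨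
  (∃ c d : ℝ, 0 < c ∧ c < d ∧ I = Set.Icc c d) ∨
  (∃ c d : ℝ, d < c ∧ c < 0 ∧ I = Set.Icc d c)

/-- The variational inequality for the projection onto an interval. -/
lemma IsProjR.variational {I : Set ℝ} (hI : I.OrdConnected) {w p t : ℝ} (hp : IsProjR I w p)
    (ht : t ∈ I) : 0 ≤ (t - p) * (p - w) := by
  obtain ⟨hpI, hmin⟩ := hp
  by_contra! h
  -- If `t` lies on the same side of `p` as `w`, moving from `p` towards `w` but not past `t`
  -- stays in `I` and gets strictly closer to `w`.
  rcases mul_neg_iff.1 h with ⟨h1, h2⟩ | ⟨h1, h2⟩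
  · have hlt : p < min t w := lt_min (by linarith) (by linarith)
    have hle := hmin (min t w) (hI.out hpI ht ⟨hlt.le, min_le_left _ _⟩)
    rw [abs_of_neg h2, abs_of_nonpos (sub_nonpos.2 (min_le_right t w))] at hle
    linarith
  · have hlt : max t w < p := max_lt (by linarith) (by linarith)
    have hle := hmin (max t w) (hI.out ht hpI ⟨le_max_left _ _, hlt.le⟩)
    rw [abs_of_pos h2, abs_of_nonneg (sub_nonneg.2 (le_max_right t w))] at hle
    linarith

/-- For either sign `s`, soft thresholding at level `τ` shifts `q` by `-sτ`, unless `s q ≤ τ`, in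
which case its value does not have the strict sign `s`. -/
lemma shrink_cases {τ : ℝ} (hτ : 0 < τ) (q : ℝ) {s : ℝ} (hs : s = 1 ∨ s = -1) :
    τ * shrink (τ⁻¹ * q) = q - s * τ ∨ (s * (τ * shrink (τ⁻¹ * q)) ≤ 0 ∧ s * q ≤ τ) := by
  obtain ⟨x, rfl⟩ : ∃ x, q = τ * x := ⟨τ⁻¹ * q, by field_simp⟩
  rw [inv_mul_cancel_left₀ hτ.ne']
  have key : shrink x = x - s ∨ (s * shrink x ≤ 0 ∧ s * x ≤ 1) := by
    unfold shrink
    rcases lt_trichotomy x 0 with hx | rfl | hx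
    · rw [Real.sign_of_neg hx, abs_of_neg hx]
      rcases hs with rfl | rfl <;> grind
    · rcases hs with rfl | rfl <;> simp
    · rw [Real.sign_of_pos hx, abs_of_pos hx]
      rcases hs with rfl | rfl <;> grind
  refine key.imp (fun h => by rw [h]; ring) fun ⟨h1, h2⟩ => ⟨?_, ?_⟩
  · nlinarith
  · nlinarith

lemma InT1.ordConnected {I : Set ℝ} (hI : InT1 I) : I.OrdConnected := by
  rcases hI with ⟨c, -, rfl⟩ | ⟨c, -, rfl⟩ | ⟨c, d, -, -, rfl⟩ | ⟨c, d, -, -, rfl⟩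
  exacts [Set.ordConnected_Ici, Set.ordConnected_Iic, Set.ordConnected_Icc, Set.ordConnected_Icc]

lemma InT1.exists_sign {I : Set ℝ} (hI : InT1 I) :
    ∃ s : ℝ, (s = 1 ∨ s = -1) ∧ ∀ t ∈ I, 0 < s * t := by
  rcases hI with ⟨c, hc, rfl⟩ | ⟨c, hc, rfl⟩ | ⟨c, d, hc, hd, rfl⟩ | ⟨c, d, hd, hc, rfl⟩
  · exact ⟨1, .inl rfl, fun t (ht : c ≤ t) => by linarith⟩
  · exact ⟨-1, .inr rfl, fun t (ht : t ≤ c) => by linarith⟩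
  · exact ⟨1, .inl rfl, fun t ht => by linarith [ht.1]⟩
  · exact ⟨-1, .inr rfl, fun t ht => by linarith [ht.2]⟩

/-- Quadratic growth of the objective away from the projected point; it gives both minimality and
uniqueness. -/
lemma quadratic_growth {τ : ℝ} (hτ : 0 < τ) {I : Set ℝ} (hI : InT1 I) {q p t : ℝ}
    (hp : IsProjR I (τ * shrink (τ⁻¹ * q)) p) (ht : t ∈ I) :
    τ * |p| + (1 / 2) * (p - q) ^ 2 + (1 / 2) * (t - p) ^ 2 ≤
      τ * |t| + (1 / 2) * (t - q) ^ 2 := by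
  obtain ⟨s, hs, hpos⟩ := hI.exists_sign
  have habs : ∀ r ∈ I, |r| = s * r := fun r hr => by
    have hr := hpos r hr
    rcases hs with rfl | rfl
    · rw [abs_of_pos (by linarith)]; ring
    · rw [abs_of_neg (by linarith)]; ring
  have hvar := hp.variational hI.ordConnected ht
  have hgrad : 0 ≤ (t - p) * (p - (q - s * τ)) := by
    rcases shrink_cases hτ q hs with h | ⟨h1, h2⟩
    · rwa [h] at hvar
    · have hsp := hpos p hp.1
      generalize τ * shrink (τ⁻¹ * q) = w at *
      have hss : s * s = 1 := by rcases hs with rfl | rfl <;> norm_num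
      have hw : 0 < s * (p - w) := by linarith
      have hq : 0 < s * (p - (q - s * τ)) := by
        linear_combination hsp + h2 - τ * hss
      -- Multiplying both factors by `s` leaves the products unchanged since `s² = 1`.
      have htp : 0 ≤ s * (t - p) := by
        refine nonneg_of_mul_nonneg_left ?_ hw
        linear_combination hvar - (t - p) * (p - w) * hss
      linear_combination mul_nonneg htp hq.le + (t - p) * (p - (q - s * τ)) * hss
  rw [habs p hp.1, habs t ht]
  linear_combination hgrad

/-- for `τ > 0` and `I ∈ T₁`, the point `p = [τ·shrink(τ⁻¹q)]_I⁺`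
is the unique minimizer over `I` of `t ↦ τ|t| + ½(t − q)²`. -/
theorem proj_shrink_prox_T1 (τ : ℝ) (hτ : 0 < τ) (I : Set ℝ) (hI : InT1 I)
    (q p : ℝ) (hp : IsProjR I (τ * shrink (τ⁻¹ * q)) p) :
    p ∈ I ∧
      (∀ t ∈ I, τ * |p| + (1 / 2) * (p - q) ^ 2 ≤ τ * |t| + (1 / 2) * (t - q) ^ 2) ∧
      (∀ t ∈ I, (∀ r ∈ I, τ * |t| + (1 / 2) * (t - q) ^ 2 ≤ τ * |r| + (1 / 2) * (r - q) ^ 2) →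
        t = p) := by
  exact ⟨hp.1, fun t ht => by
      linarith [quadratic_growth hτ hI hp ht, sq_nonneg (t - p)], fun t ht hmin => by
      have hsq : (t - p) ^ 2 = 0 :=
        le_antisymm (by linarith [quadratic_growth hτ hI hp ht, hmin p hp.1]) (sq_nonneg _)
      exact sub_eq_zero.1 (pow_eq_zero_iff two_ne_zero |>.1 hsq)⟩
end
end

section
/- Let τ > 0, let I₁, …, Iₙ ⊆ ℝ be intervals each belonging to T₁ ∪ T₂, and let X = I₁ × ⋯ × Iₙ ⊆ ℝⁿ. For every v ∈ ℝⁿ, the vector p defined componentwise by pᵢ = [τ·shrink(τ⁻¹vᵢ)]_{Iᵢ}⁺ satisfies p ∈ X and τ·‖p‖₁ + ½‖p − v‖₂² ≤ τ·‖x‖₁ + ½‖x − v‖₂² for all x ∈ X; that is, p is the unique minimizer over X of x ↦ τ‖x‖₁ + ½‖x − v‖₂² (equivalently, p = prox of x ↦ τ‖x‖₁ + δ_X(x) at v). -/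
/-!
The objective `x ↦ τ‖x‖₁ + ½‖x - v‖²` is separable, so everything happens in one coordinate. There
`w = τ * shrink (τ⁻¹ * v)` is the unconstrained minimizer of `t ↦ τ|t| + ½(t - v)²`; equivalently,
`v - w` is `τ` times a subgradient of the absolute value at `w`. The projection `p` of `w` onto an
interval satisfies the variational inequality `0 ≤ (t - p)(p - w)` (`IsProjR.variational`), i.e. `p`
lies weakly between `w` and every other point `t` of the interval. Since slopes of a convex function
increase, the subgradient at `w` then also bounds the slope of `τ|·|` between `p` and `t`
(`slope_bound`). Combining the two gives the quadratic growth estimate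
`F p + ½(t - p)² ≤ F t` for `F t = τ|t| + ½(t - v)²` (`coord_growth`); summing over the coordinates yields both the
minimality of `p` and its uniqueness.

The classes `T₁` and `T₂` matter only through the fact that their members are order-connected.
-/

noncomputable section

/-- Membership in the class `T₂` of intervals. -/
def InT2 (I : Set ℝ) : Prop := ∃ c d : ℝ, c < 0 ∧ 0 < d ∧ I = Set.Icc c d

lemma ordConnected_of_inT1_or_inT2 {I : Set ℝ} (h : InT1 I ∨ InT2 I) : I.OrdConnected := by
  rcases h with (⟨c, _, rfl⟩ | ⟨c, _, rfl⟩ | ⟨c, d, _, _, rfl⟩ | ⟨c, d, _, _, rfl⟩) |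
    ⟨c, d, _, _, rfl⟩
  · exact Set.ordConnected_Ici
  · exact Set.ordConnected_Iic
  all_goals exact Set.ordConnected_Icc

/-- Soft thresholding, case by case. -/
lemma mul_shrink_cases {τ : ℝ} (hτ : 0 < τ) (v : ℝ) :
    (0 < τ * shrink (τ⁻¹ * v) ∧ v - τ * shrink (τ⁻¹ * v) = τ) ∨
      (τ * shrink (τ⁻¹ * v) < 0 ∧ v - τ * shrink (τ⁻¹ * v) = -τ) ∨
      (τ * shrink (τ⁻¹ * v) = 0 ∧ |v| ≤ τ) := by
  obtain ⟨s, rfl⟩ : ∃ s, v = τ * s := ⟨τ⁻¹ * v, by field_simp⟩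
  rw [inv_mul_cancel_left₀ hτ.ne']
  rcases le_or_gt |s| 1 with hs | hs
  · refine Or.inr (Or.inr ⟨?_, ?_⟩)
    · rw [shrink, max_eq_right (by linarith)]; simp
    · rw [abs_mul, abs_of_pos hτ]; nlinarith
  · rcases lt_abs.1 hs with h | h
    · have e : shrink s = s - 1 := by
        rw [shrink, max_eq_left (by linarith), Real.sign_of_pos (by linarith),
          abs_of_pos (by linarith), one_mul]
      rw [e]
      exact Or.inl ⟨mul_pos hτ (by linarith), by ring⟩
    · have e : shrink s = s + 1 := by
        rw [shrink, max_eq_left (by linarith), Real.sign_of_neg (by linarith),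
          abs_of_neg (by linarith)]
        ring
      rw [e]
      exact Or.inr (Or.inl ⟨mul_neg_of_pos_of_neg hτ (by linarith), by ring⟩)

/-- Monotonicity of the slopes of `τ|·|`: the subgradient `v - w` at `w` bounds the slope over the
segment from `p` to `t` whenever `p` lies weakly between `w` and `t`. -/
lemma slope_bound {τ : ℝ} (hτ : 0 < τ) {v w p t : ℝ}
    (hw : (0 < w ∧ v - w = τ) ∨ (w < 0 ∧ v - w = -τ) ∨ (w = 0 ∧ |v| ≤ τ))
    (h : 0 ≤ (t - p) * (p - w)) : (v - w) * (t - p) ≤ τ * |t| - τ * |p| := by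
  rw [← mul_sub]
  rcases hw with ⟨hw, e⟩ | ⟨hw, e⟩ | ⟨rfl, hv⟩
  · rw [e]
    refine mul_le_mul_of_nonneg_left ?_ hτ.le
    rcases le_or_gt w p with hp | hp
    · rw [abs_of_pos (by linarith : 0 < p)]
      linarith [le_abs_self t]
    · have htp : t ≤ p := by by_contra! h'; nlinarith
      have := abs_sub_abs_le_abs_sub p t
      rw [abs_of_nonneg (by linarith : 0 ≤ p - t)] at this
      linarith
  · rw [e, neg_mul, ← mul_neg]
    refine mul_le_mul_of_nonneg_left ?_ hτ.le
    rcases le_or_gt p w with hp | hp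
    · rw [abs_of_neg (by linarith : p < 0)]
      linarith [neg_abs_le t]
    · have htp : p ≤ t := by by_contra! h'; nlinarith
      have := abs_sub_abs_le_abs_sub p t
      rw [abs_of_nonpos (by linarith : p - t ≤ 0)] at this
      linarith
  · obtain ⟨h1, h2⟩ := abs_le.1 hv
    rw [sub_zero] at h ⊢
    rcases lt_trichotomy p 0 with hp | rfl | hp
    · have htp : t ≤ p := by by_contra! h'; nlinarith
      rw [abs_of_neg hp, abs_of_neg (by linarith : t < 0)]
      nlinarith
    · rw [abs_zero, sub_zero, sub_zero]
      calc v * t ≤ |v * t| := le_abs_self _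
        _ = |v| * |t| := abs_mul _ _
        _ ≤ τ * |t| := mul_le_mul_of_nonneg_right hv (abs_nonneg _)
    · have htp : p ≤ t := by by_contra! h'; nlinarith
      rw [abs_of_pos hp, abs_of_pos (by linarith : 0 < t)]
      nlinarith

/-- Quadratic growth of the one-dimensional objective around the projected shrinkage. -/
lemma coord_growth {τ : ℝ} (hτ : 0 < τ) {I : Set ℝ} (hI : I.OrdConnected) {v p t : ℝ}
    (hp : IsProjR I (τ * shrink (τ⁻¹ * v)) p) (ht : t ∈ I) :
    τ * |p| + (1 / 2) * (p - v) ^ 2 + (1 / 2) * (t - p) ^ 2 ≤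
      τ * |t| + (1 / 2) * (t - v) ^ 2 := by
  have h := hp.variational hI ht
  have h' := slope_bound hτ (mul_shrink_cases hτ v) h
  linarith

/-- the componentwise projected shrinkage vector is the unique
minimizer over the box `X = I₁ × ⋯ × Iₙ` of `x ↦ τ‖x‖₁ + ½‖x − v‖₂²`, i.e. it is
the proximal point of `x ↦ τ‖x‖₁ + δ_X(x)` at `v`. -/
theorem projected_shrinkage_is_prox {n : ℕ} (τ : ℝ) (hτ : 0 < τ)
    (I : Fin n → Set ℝ) (hI : ∀ i, InT1 (I i) ∨ InT2 (I i))
    (X : Set (EuclideanSpace ℝ (Fin n))) (hX : X = {x | ∀ i, x i ∈ I i})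
    (v p : EuclideanSpace ℝ (Fin n))
    (hp : ∀ i, IsProjR (I i) (τ * shrink (τ⁻¹ * v i)) (p i)) :
    p ∈ X ∧
      (∀ x ∈ X,
        τ * (∑ i, |p i|) + (1 / 2) * ‖p - v‖ ^ 2 ≤
          τ * (∑ i, |x i|) + (1 / 2) * ‖x - v‖ ^ 2) ∧
      (∀ x ∈ X,
        (∀ z ∈ X,
          τ * (∑ i, |x i|) + (1 / 2) * ‖x - v‖ ^ 2 ≤
            τ * (∑ i, |z i|) + (1 / 2) * ‖z - v‖ ^ 2) → x = p) := by
  -- Summing the coordinatewise estimates gives quadratic growth on all of `X`.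
  have growth : ∀ x ∈ X,
      τ * (∑ i, |p i|) + (1 / 2) * ‖p - v‖ ^ 2 + (1 / 2) * ‖x - p‖ ^ 2 ≤
        τ * (∑ i, |x i|) + (1 / 2) * ‖x - v‖ ^ 2 := by
    intro x hx
    rw [hX] at hx
    simp only [EuclideanSpace.real_norm_sq_eq, Finset.mul_sum, ← Finset.sum_add_distrib]
    exact Finset.sum_le_sum fun i _ =>
      coord_growth hτ (ordConnected_of_inT1_or_inT2 (hI i)) (hp i) (hx i)
  have hpX : p ∈ X := by
    rw [hX]
    exact fun i => (hp i).1
  refine ⟨hpX, fun x hx => ?_, fun x hx hmin => ?_⟩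
  · linarith [growth x hx, sq_nonneg ‖x - p‖]
  · have h : ‖x - p‖ ^ 2 = 0 :=
      le_antisymm (by linarith [growth x hx, hmin p hpX]) (sq_nonneg _)
    exact sub_eq_zero.1 (norm_eq_zero.1 (pow_eq_zero_iff two_ne_zero |>.1 h))
end
end

section
/- Let A be a real m×n matrix, b ∈ ℝᵐ, u ∈ ℝⁿ, τ > 0, h > 0, and let X = I₁ × ⋯ × Iₙ ⊆ ℝⁿ be a box with each Iᵢ ∈ T₁ ∪ T₂. Define s : ℝᵐ → ℝⁿ componentwise by s(y)ᵢ = [τ·shrink(τ⁻¹uᵢ + (Aᵀy)ᵢ)]_{Iᵢ}⁺. Let ŷ ∈ ℝᵐ satisfy A·s(ŷ) = b and set x* = s(ŷ). Then for any y ∈ ℝᵐ, setting x⁺ = s(y) and y⁺ = y + h(b − A·x⁺), one has ‖y⁺ − ŷ‖₂² ≤ ‖y − ŷ‖₂² − h(2τ⁻¹ − h‖A‖²)·‖x⁺ − x*‖₂², where ‖A‖ is the ℓ²→ℓ² operator norm of A. -/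
/-!
Coordinatewise, `S y i` is a metric projection of `τ * shrink (z i)`, where
`z = τ⁻¹ u + Aᵀ y`. Shrinkage is monotone and 1-Lipschitz, and the projection onto a convex
subset of `ℝ` is firmly nonexpansive, so `(S y i - S ŷ i)² ≤ τ (S y i - S ŷ i) (z i - ẑ i)`
(`IsProjR.sq_sub_le`). The shift `τ⁻¹ u` cancels in `z - ẑ = Aᵀ (y - ŷ)`; summing over the
coordinates and moving `A` across the inner product gives, for `d = S y - S ŷ`,
`τ⁻¹ ‖d‖² ≤ ⟪y - ŷ, A d⟫`. Since `A (S ŷ) = b`, the update is `y⁺ - ŷ = (y - ŷ) - h • A d`, and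
the estimate follows by expanding the square and using `‖A d‖ ≤ ‖A‖ ‖d‖`.

Of the classes `T₁` and `T₂` only the convexity of their members matters.
-/


noncomputable section

open scoped RealInnerProductSpace

/-- The ℓ²→ℓ² operator norm of a matrix. -/
def opNorm {m n : ℕ} (A : Matrix (Fin m) (Fin n) ℝ) : ℝ :=
  ‖LinearMap.toContinuousLinearMap (Matrix.toEuclideanLin A)‖

/-- A form of the shrinkage operator in which monotonicity and the Lipschitz bound are visible. -/
lemma shrink_eq (s : ℝ) : shrink s = max (s - 1) 0 + min (s + 1) 0 := by
  unfold shrink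
  rcases lt_trichotomy s 0 with hs | rfl | hs
  · rw [Real.sign_of_neg hs, abs_of_neg hs, max_eq_right (by linarith : s - 1 ≤ 0)]
    rcases le_total (-s - 1) 0 with h | h
    · rw [max_eq_right h, min_eq_right (by linarith)]; ring
    · rw [max_eq_left h, min_eq_left (by linarith)]; ring
  · simp
  · rw [Real.sign_of_pos hs, abs_of_pos hs, min_eq_right (by linarith : 0 ≤ s + 1)]
    ring

lemma shrink_mono : Monotone shrink := by
  intro a b hab
  rw [shrink_eq, shrink_eq]
  gcongr

lemma shrink_sub_le {a b : ℝ} (hab : a ≤ b) : shrink b - shrink a ≤ b - a := by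
  rw [shrink_eq, shrink_eq]
  rcases max_cases (a - 1) 0 with h₁ | h₁ <;> rcases max_cases (b - 1) 0 with h₂ | h₂ <;>
    rcases min_cases (a + 1) 0 with h₃ | h₃ <;> rcases min_cases (b + 1) 0 with h₄ | h₄ <;>
    linarith

lemma ordConnected_of_inT {I : Set ℝ} (hI : InT1 I ∨ InT2 I) : I.OrdConnected := by
  rcases hI with (⟨c, -, rfl⟩ | ⟨c, -, rfl⟩ | ⟨c, d, -, -, rfl⟩ | ⟨c, d, -, -, rfl⟩) |
    ⟨c, d, -, -, rfl⟩
  · exact Set.ordConnected_Ici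
  · exact Set.ordConnected_Iic
  all_goals exact Set.ordConnected_Icc

/-- Projections `q < p` of `v` and `w` satisfy `v ≤ q` and `p ≤ w`: otherwise a point of
`[q, p]` closer to `v` or `w` would exist. -/
lemma IsProjR.sub_le_sub {I : Set ℝ} (hI : I.OrdConnected) {v w p q : ℝ}
    (hp : IsProjR I w p) (hq : IsProjR I v q) (hqp : q < p) : p - q ≤ w - v := by
  have h₁ : p ≤ w := by
    by_contra! hlt
    have hmax : max w q < p := max_lt hlt hqp
    have := hp.2 _ (hI.out hq.1 hp.1 ⟨le_max_right w q, hmax.le⟩)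
    rw [abs_of_nonneg (by linarith), abs_of_nonneg (by linarith [le_max_left w q])] at this
    linarith
  have h₂ : v ≤ q := by
    by_contra! hlt
    have hmin : q < min v p := lt_min hlt hqp
    have := hq.2 _ (hI.out hq.1 hp.1 ⟨hmin.le, min_le_right v p⟩)
    rw [abs_of_nonpos (by linarith), abs_of_nonpos (by linarith [min_le_left v p])] at this
    linarith
  linarith

lemma IsProjR.sub_le_mul_of_lt {I : Set ℝ} (hI : I.OrdConnected) {τ a b p q : ℝ} (hτ : 0 < τ)
    (hp : IsProjR I (τ * shrink a) p) (hq : IsProjR I (τ * shrink b) q) (hqp : q < p) :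
    p - q ≤ τ * (a - b) := by
  have h := hp.sub_le_sub hI hq hqp
  have hba : b ≤ a := by
    by_contra! hlt
    have := mul_le_mul_of_nonneg_left (shrink_mono hlt.le) hτ.le
    linarith
  have := mul_le_mul_of_nonneg_left (shrink_sub_le hba) hτ.le
  linarith

/-- Firm nonexpansiveness, up to the factor `τ`, of projection after scaled shrinkage. -/
lemma IsProjR.sq_sub_le {I : Set ℝ} (hI : I.OrdConnected) {τ a b p q : ℝ} (hτ : 0 < τ)
    (hp : IsProjR I (τ * shrink a) p) (hq : IsProjR I (τ * shrink b) q) :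
    (p - q) ^ 2 ≤ τ * ((p - q) * (a - b)) := by
  rcases lt_trichotomy q p with h | rfl | h
  · nlinarith [hp.sub_le_mul_of_lt hI hτ hq h]
  · simp
  · nlinarith [hq.sub_le_mul_of_lt hI hτ hp h]

/-- one-step estimate of the ProShrink iteration:
`‖y⁺ − ŷ‖² ≤ ‖y − ŷ‖² − h(2τ⁻¹ − h‖A‖²)‖x⁺ − x*‖²`. -/
theorem proshrink_one_step {m n : ℕ} (A : Matrix (Fin m) (Fin n) ℝ)
    (b : EuclideanSpace ℝ (Fin m)) (u : EuclideanSpace ℝ (Fin n))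
    (τ h : ℝ) (hτ : 0 < τ) (hh : 0 < h)
    (I : Fin n → Set ℝ) (hI : ∀ i, InT1 (I i) ∨ InT2 (I i))
    (X : Set (EuclideanSpace ℝ (Fin n))) (hX : X = {x | ∀ i, x i ∈ I i})
    (S : EuclideanSpace ℝ (Fin m) → EuclideanSpace ℝ (Fin n))
    (hS : ∀ y i, IsProjR (I i)
      (τ * shrink (τ⁻¹ * u i + Matrix.toEuclideanLin A.transpose y i)) (S y i))
    (yhat : EuclideanSpace ℝ (Fin m)) (hyhat : Matrix.toEuclideanLin A (S yhat) = b)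
    (xs : EuclideanSpace ℝ (Fin n)) (hxs : xs = S yhat)
    (y : EuclideanSpace ℝ (Fin m))
    (xp : EuclideanSpace ℝ (Fin n)) (hxp : xp = S y)
    (yp : EuclideanSpace ℝ (Fin m))
    (hyp : yp = y + h • (b - Matrix.toEuclideanLin A xp)) :
    ‖yp - yhat‖ ^ 2 ≤ ‖y - yhat‖ ^ 2 - h * (2 * τ⁻¹ - h * opNorm A ^ 2) * ‖xp - xs‖ ^ 2 := by
  subst hxs hxp hyp
  set d := S y - S yhat with hd
  have hmono : ‖d‖ ^ 2 ≤ τ * ⟪y - yhat, Matrix.toEuclideanLin A d⟫ := by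
    have hadj : ⟪y - yhat, Matrix.toEuclideanLin A d⟫
        = ⟪Matrix.toEuclideanLin A.transpose (y - yhat), d⟫ := by
      rw [← Matrix.conjTranspose_eq_transpose_of_trivial,
        Matrix.toEuclideanLin_conjTranspose_eq_adjoint, LinearMap.adjoint_inner_left]
    rw [hadj, EuclideanSpace.real_norm_sq_eq, PiLp.inner_apply, Finset.mul_sum]
    refine Finset.sum_le_sum fun i _ => ?_
    have := (hS y i).sq_sub_le (ordConnected_of_inT (hI i)) hτ (hS yhat i)
    rw [add_sub_add_left_eq_sub] at this
    simpa [hd, map_sub] using this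
  have hinner : τ⁻¹ * ‖d‖ ^ 2 ≤ ⟪y - yhat, Matrix.toEuclideanLin A d⟫ := by
    rwa [inv_mul_le_iff₀ hτ]
  have hop : ‖Matrix.toEuclideanLin A d‖ ^ 2 ≤ opNorm A ^ 2 * ‖d‖ ^ 2 := by
    rw [← mul_pow]
    gcongr
    exact (LinearMap.toContinuousLinearMap (Matrix.toEuclideanLin A)).le_opNorm d
  have hstep : y + h • (b - Matrix.toEuclideanLin A (S y)) - yhat
      = (y - yhat) - h • Matrix.toEuclideanLin A d := by
    rw [hd, map_sub, hyhat]
    module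
  rw [hstep, norm_sub_sq_real, inner_smul_right, norm_smul, mul_pow, Real.norm_eq_abs, sq_abs]
  have h₁ := mul_le_mul_of_nonneg_left hinner hh.le
  have h₂ := mul_le_mul_of_nonneg_left hop (sq_nonneg h)
  linarith
end
end
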